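/- Let E be a real Banach space, let Ξ ⊆ E be a finite-dimensional linear subspace, and let M ⊆ E be a linear subspace that is infinite-dimensional (as a real vector space). Then there exists a continuous linear map π : E → E which is a projection (π ∘ π = π), whose range is exactly Ξ, and which maps M onto Ξ, i.e. π(M) = Ξ. -/

import Mathlib

/-- (Inside Proposition 2.33 of the paper.) In a Banach space, given a
finite-dimensional subspace Ξ and an infinite-dimensional subspace M, there is a
continuous linear projection onto Ξ mapping M onto Ξ. -/
theorem exists_projection_onto_findim_surjective_from_infdim
    {E : Type*} [NormedAddCommGroup E] [NormedSpace ℝ E] [CompleteSpace E]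
    (Ξ M : Submodule ℝ E) [FiniteDimensional ℝ Ξ]
    (hM : ¬ FiniteDimensional ℝ M) :
    ∃ π : E →L[ℝ] E,
      (∀ x : E, π (π x) = π x) ∧
      LinearMap.range π.toLinearMap = Ξ ∧
      Submodule.map π.toLinearMap M = Ξ := by
  obtain ⟨p, hp⟩ := Submodule.ClosedComplemented.of_finiteDimensional (𝕜 := ℝ) Ξ
  let N : Submodule ℝ E := M ⊓ LinearMap.ker p.toLinearMap
  have hN : ¬ FiniteDimensional ℝ N := by
    intro h
    apply hM
    have h1 : N.FG := Module.Finite.iff_fg.mp h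
    exact Module.Finite.iff_fg.mpr
      (Submodule.fg_of_fg_map_of_fg_inf_ker p.toLinearMap (IsNoetherian.noetherian _) h1)
  have hrank : ((Module.finrank ℝ Ξ : ℕ) : Cardinal) ≤ Module.rank ℝ N := by
    have : Cardinal.aleph0 ≤ Module.rank ℝ N := by
      by_contra hlt
      exact hN (Module.rank_lt_aleph0_iff.mp (not_le.mp hlt))
    exact (Cardinal.natCast_lt_aleph0).le.trans this
  obtain ⟨f, hf⟩ := Module.le_rank_iff_exists_linearMap.mp hrank
  let g : (Fin (Module.finrank ℝ Ξ) → ℝ) →ₗ[ℝ] E := N.subtype ∘ₗ f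
  have hg : Function.Injective g := N.injective_subtype.comp hf
  let W : Submodule ℝ E := LinearMap.range g
  have hWN : ∀ w ∈ W, w ∈ N := by
    rintro _ ⟨x, rfl⟩
    exact (f x).2
  obtain ⟨q, hq⟩ := Submodule.ClosedComplemented.of_finiteDimensional (𝕜 := ℝ) W
  have hdim : Module.finrank ℝ W = Module.finrank ℝ Ξ := by
    rw [LinearMap.finrank_range_of_inj hg]; simp
  let φ : W ≃ₗ[ℝ] Ξ := LinearEquiv.ofFinrankEq W Ξ hdim
  let r : E →L[ℝ] Ξ :=
    p + (LinearMap.toContinuousLinearMap φ.toLinearMap).comp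
      (q.comp (ContinuousLinearMap.id ℝ E - Ξ.subtypeL.comp p))
  have hr : ∀ x, r x = p x + φ (q (x - p x)) := fun x => rfl
  have hrΞ : ∀ x : Ξ, r x = x := by
    intro x
    rw [hr, hp]; simp
  have hrW : ∀ w : W, r w = φ w := by
    intro w
    have h0 : p (w : E) = 0 := (hWN w w.2).2
    rw [hr, h0]; simp [hq]
  have hle : Submodule.map (Ξ.subtypeL.comp r).toLinearMap M ≤ Ξ := by
    rintro _ ⟨x, _, rfl⟩
    exact (r x).2
  refine ⟨Ξ.subtypeL.comp r, fun x => congrArg Subtype.val (hrΞ (r x)), ?_, ?_⟩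
  · apply le_antisymm
    · rintro _ ⟨x, rfl⟩
      exact (r x).2
    · intro x hx
      exact ⟨x, congrArg Subtype.val (hrΞ ⟨x, hx⟩)⟩
  · apply le_antisymm hle
    intro x hx
    refine ⟨φ.symm ⟨x, hx⟩, (hWN _ (φ.symm ⟨x, hx⟩).2).1, ?_⟩
    have := hrW (φ.symm ⟨x, hx⟩)
    rw [φ.apply_symm_apply] at this
    exact congrArg Subtype.val this
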